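/- Let k be a field of characteristic p > 0 and n ≥ 3. Every finite-dimensional representation ρ : SL_n(ℤ) → GL_N(k) factors through the reduction map SL_n(ℤ) → SL_n(ℤ/ℓℤ) for some ℓ ≥ 1. -/

import Mathlib

open Matrix

/-!
For distinct `i`, `j`, `k` the elementary matrix `e_ij(1)` is the commutator of `e_ik(1)` and
`e_kj(1)`, and it commutes with both. If `z = ⁅x, y⁆` is central in the group generated by `x` and
`y`, then on an eigenspace of `z` of dimension `d`, with eigenvalue `c`, taking determinants of
`x y = c y x` gives `c ^ d = 1`. Hence, in characteristic `p`, some power of `ρ (e_ij(1))` is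
unipotent, and a further `p`-power of it is trivial. So the kernel of `ρ` contains the normal
closure `E(ℓ)` of the `ℓ`-th powers of the elementary matrices, with `ℓ` depending only on `N` and
`p`, and `ℓ` may be chosen divisible by `4`.

The theorem then follows from `E(ℓ) = Γ(ℓ)` (Mennicke, Bass–Lazard–Serre). Modulo `E(ℓ)`, column
operations reduce `Γ(ℓ)` to its block in `SL₂`, and the class of a matrix there depends only on
its first row and defines a Mennicke symbol. By Dirichlet's theorem the first entry may be taken
to be `-r` with `r` a prime; since `b ^ ((r - 1) / 2) = ±1` modulo `r`, the symbol is then killed by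
`(r - 1) / 2`, and two primes with coprime values of `(r - 1) / 2` kill it altogether.
-/

section HeisenbergCommutator

open Module Module.End
open scoped Polynomial commutatorElement

variable {L V : Type*} [Field L] [AddCommGroup V] [Module L V] [FiniteDimensional L V]

theorem det_restrict_ne_zero_of_isUnit {x : End L V} (hx : IsUnit x) {W : Submodule L V}
    (hW : Set.MapsTo x W W) : (x.restrict hW).det ≠ 0 := by
  intro h₀
  obtain ⟨v, hv, hv₀⟩ := Submodule.exists_mem_ne_zero_of_ne_bot
    (LinearMap.bot_lt_ker_of_det_eq_zero h₀).ne'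
  refine hv₀ (Subtype.ext (((isUnit_iff _).1 hx).injective ?_))
  rw [← LinearMap.coe_restrict_apply hW v, LinearMap.mem_ker.1 hv, W.coe_zero, map_zero]

theorem pow_finrank_factorial_eq_one_of_hasEigenvalue {x y z : End L V} (hx : IsUnit x)
    (hy : IsUnit y) (hxz : Commute x z) (hyz : Commute y z) (hxy : x * y = z * (y * x)) {c : L}
    (hc : z.HasEigenvalue c) : c ^ (finrank L V).factorial = 1 := by
  have hxE : Set.MapsTo x (z.eigenspace c) (z.eigenspace c) :=
    mapsTo_genEigenspace_of_comm hxz.symm c 1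
  have hyE : Set.MapsTo y (z.eigenspace c) (z.eigenspace c) :=
    mapsTo_genEigenspace_of_comm hyz.symm c 1
  have hres : x.restrict hxE * y.restrict hyE = c • (y.restrict hyE * x.restrict hxE) := by
    ext v
    exact (congr($hxy v)).trans (mem_eigenspace_iff.1 (hyE (hxE v.2)))
  have hdet := congr_arg LinearMap.det hres
  rw [map_mul, LinearMap.det_smul, map_mul, mul_comm (y.restrict hyE).det] at hdet
  have hcpow : c ^ finrank L (z.eigenspace c) = 1 :=
    (mul_eq_right₀ (mul_ne_zero (det_restrict_ne_zero_of_isUnit hx hxE)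
      (det_restrict_ne_zero_of_isUnit hy hyE))).1 hdet.symm
  have : Nontrivial (z.eigenspace c) := Submodule.nontrivial_iff_ne_bot.2 hc
  obtain ⟨k, hk⟩ := Nat.dvd_factorial finrank_pos (Submodule.finrank_le (z.eigenspace c))
  rw [hk, pow_mul, hcpow, one_pow]

theorem isNilpotent_of_forall_hasEigenvalue_eq_zero [IsAlgClosed L] {f : End L V}
    (hf : ∀ c, f.HasEigenvalue c → c = 0) : IsNilpotent f := by
  have htop : f.maxGenEigenspace 0 = ⊤ := by
    rw [eq_top_iff, ← iSup_maxGenEigenspace_eq_top f]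
    refine iSup_le fun c ↦ ?_
    by_cases hc : f.HasUnifEigenvalue c ⊤
    · rw [hf c (hc.lt zero_lt_one)]
    · exact (not_not.1 hc).le.trans bot_le
  refine ((LinearMap.charpoly_nilpotent_tfae f).out 0 2).2 fun v ↦ ?_
  simpa only [mem_maxGenEigenspace, zero_smul, sub_zero] using htop.ge (Submodule.mem_top (x := v))

theorem pow_finrank_eq_one_of_mul_eq_mul_mul [IsAlgClosed L] (p : ℕ) [hp : Fact p.Prime]
    [CharP L p] {x y z : End L V} (hx : IsUnit x) (hy : IsUnit y) (hxz : Commute x z)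
    (hyz : Commute y z) (hxy : x * y = z * (y * x)) :
    z ^ ((finrank L V).factorial * p ^ finrank L V) = 1 := by
  set d := finrank L V
  have hnil : IsNilpotent (z ^ d.factorial - 1) := by
    refine isNilpotent_of_forall_hasEigenvalue_eq_zero fun c hc ↦ ?_
    have hc' : c + 1 ∈ spectrum L (z ^ d.factorial) := by
      have := spectrum.add_mem_add_iff (s := 1).2 hc.mem_spectrum
      rwa [map_one, add_sub_cancel] at this
    obtain ⟨e, he, hec⟩ := (spectrum.map_pow_of_pos z d.factorial_pos).le hc'
    have he1 : e ^ d.factorial = 1 :=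
      pow_finrank_factorial_eq_one_of_hasEigenvalue hx hy hxz hyz hxy
        (HasEigenvalue.of_mem_spectrum he)
    exact right_eq_add.1 (he1.symm.trans hec)
  have hpow : (z ^ d.factorial - 1) ^ p ^ d = 0 := by
    have := LinearMap.aeval_self_charpoly (z ^ d.factorial - 1)
    rw [(LinearMap.isNilpotent_iff_charpoly _).1 hnil, Polynomial.aeval_X_pow] at this
    exact pow_eq_zero_of_le (Nat.lt_pow_self hp.out.one_lt).le this
  have hfrob : (Polynomial.X ^ d.factorial - 1 : L[X]) ^ p ^ d =
      Polynomial.X ^ (d.factorial * p ^ d) - 1 := by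
    rw [sub_pow_char_pow, one_pow, pow_mul]
  have := congr_arg (Polynomial.aeval z) hfrob
  simp only [map_sub, map_pow, Polynomial.aeval_X, map_one, hpow] at this
  exact sub_eq_zero.1 this.symm

theorem commutatorElement_pow_eq_one {K ι : Type*} [CommRing K] [IsDomain K] (p : ℕ)
    [Fact p.Prime] [CharP K p] [Fintype ι] [DecidableEq ι] {x y : GL ι K}
    (hx : Commute x ⁅x, y⁆) (hy : Commute y ⁅x, y⁆) :
    ⁅x, y⁆ ^ ((Fintype.card ι).factorial * p ^ Fintype.card ι) = 1 := by
  let L := AlgebraicClosure (FractionRing K)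
  let f : K →+* L := (algebraMap (FractionRing K) L).comp (algebraMap K (FractionRing K))
  have hf : Function.Injective f :=
    (algebraMap (FractionRing K) L).injective.comp (IsFractionRing.injective K (FractionRing K))
  have : CharP L p := charP_of_injective_ringHom hf p
  let toEnd : Matrix ι ι K →+* End L (ι → L) := (toLinAlgEquiv' (R := L)).toRingHom.comp f.mapMatrix
  have htoEnd : Function.Injective toEnd :=
    (toLinAlgEquiv' (R := L)).injective.comp (Matrix.map_injective hf)
  have key := pow_finrank_eq_one_of_mul_eq_mul_mul p (x.isUnit.map toEnd) (y.isUnit.map toEnd)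
    (hx.units_val.map toEnd) (hy.units_val.map toEnd) <| by
      rw [← map_mul, ← map_mul, ← map_mul, ← Units.val_mul, ← Units.val_mul, ← Units.val_mul]
      congr 2
      group
  rw [finrank_fintype_fun_eq_card, ← map_pow, ← map_one toEnd] at key
  exact Units.ext (htoEnd key)

end HeisenbergCommutator

section StableRange

variable {R : Type*} [CommRing R]

theorem exists_isUnit_add_mul_of_isCoprime [Finite (MaximalSpectrum R)] {a c : R}
    (h : IsCoprime a c) : ∃ s, IsUnit (a + s * c) := by
  classical
  have hmax : Pairwise (Function.onFun IsCoprime fun 𝔪 : MaximalSpectrum R ↦ 𝔪.asIdeal) :=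
    fun 𝔪 𝔫 hne ↦ Ideal.isCoprime_of_isMaximal (hne ∘ MaximalSpectrum.ext)
  obtain ⟨s, hs⟩ := Ideal.exists_forall_sub_mem_ideal hmax fun 𝔪 ↦
    if a ∈ 𝔪.asIdeal then 1 else 0
  refine ⟨s, of_not_not fun hu ↦ ?_⟩
  obtain ⟨𝔪, hmax𝔪, hmem⟩ := exists_max_ideal_of_mem_nonunits hu
  have hs𝔪 := hs ⟨𝔪, hmax𝔪⟩
  by_cases ha : a ∈ 𝔪
  · have hsc : s * c ∈ 𝔪 := (Ideal.add_mem_iff_right 𝔪 ha).1 hmem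
    rw [if_pos ha] at hs𝔪
    have hc : c ∈ 𝔪 := (hmax𝔪.isPrime.mem_or_mem hsc).resolve_left fun hs' ↦
      (Ideal.ne_top_iff_one 𝔪).1 hmax𝔪.ne_top (by simpa using 𝔪.sub_mem hs' hs𝔪)
    obtain ⟨u, v, huv⟩ := h
    exact (Ideal.ne_top_iff_one 𝔪).1 hmax𝔪.ne_top
      (huv ▸ 𝔪.add_mem (𝔪.mul_mem_left u ha) (𝔪.mul_mem_left v hc))
  · rw [if_neg ha, sub_zero] at hs𝔪
    exact ha ((Ideal.add_mem_iff_left 𝔪 (𝔪.mul_mem_right c hs𝔪)).1 hmem)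

theorem exists_isCoprime_add_mul {a b c : R} [Finite (MaximalSpectrum (R ⧸ Ideal.span {a}))]
    (h : ∃ x y z, x * a + y * b + z * c = 1) : ∃ s, IsCoprime a (b + s * c) := by
  obtain ⟨x, y, z, hxyz⟩ := h
  let π := Ideal.Quotient.mk (Ideal.span {a})
  have hbc : IsCoprime (π b) (π c) := by
    refine ⟨π y, π z, ?_⟩
    rw [← map_mul, ← map_mul, ← map_add, ← map_one π, Ideal.Quotient.mk_eq_mk_iff_sub_mem,
      Ideal.mem_span_singleton']
    exact ⟨-x, by linear_combination -hxyz⟩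
  obtain ⟨s, hs⟩ := exists_isUnit_add_mul_of_isCoprime hbc
  obtain ⟨s, rfl⟩ := Ideal.Quotient.mk_surjective s
  obtain ⟨t, ht⟩ := hs.exists_left_inv
  obtain ⟨t, rfl⟩ := Ideal.Quotient.mk_surjective t
  refine ⟨s, ?_⟩
  rw [← map_mul, ← map_add, ← map_mul, ← map_one π, Ideal.Quotient.mk_eq_mk_iff_sub_mem,
    Ideal.mem_span_singleton'] at ht
  obtain ⟨u, hu⟩ := ht
  exact ⟨-u, t, by linear_combination -hu⟩

theorem finite_maximalSpectrum_int_quotient {a : ℤ} (ha : a ≠ 0) :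
    Finite (MaximalSpectrum (ℤ ⧸ Ideal.span {a})) := by
  have : Finite (ℤ ⧸ Ideal.span {a}) := Ideal.finiteQuotientOfFreeOfNeBot _ (by simpa using ha)
  infer_instance

end StableRange

section Transvections

open scoped commutatorElement

variable {ι R : Type*} [Fintype ι] [DecidableEq ι] [CommRing R] {i j k l : ι}

theorem commutatorElement_transvection (hij : i ≠ j) (hik : i ≠ k) (hkj : k ≠ j) (a b : R) :
    ⁅SpecialLinearGroup.transvection hik a, SpecialLinearGroup.transvection hkj b⁆ =
      SpecialLinearGroup.transvection hij (a * b) := by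
  rw [commutatorElement_def, mul_inv_eq_iff_eq_mul, mul_inv_eq_iff_eq_mul]
  apply Subtype.ext
  simp only [Matrix.SpecialLinearGroup.coe_mul, SpecialLinearGroup.transvection_coe]
  simp only [mul_add, add_mul, one_mul, mul_one, single_mul_single_same,
    single_mul_single_of_ne _ _ _ _ hij.symm, single_mul_single_of_ne _ _ _ _ hkj.symm, add_zero]
  abel

theorem commute_transvection (hij : i ≠ j) (hkl : k ≠ l) (hjk : j ≠ k) (hli : l ≠ i) (a b : R) :
    Commute (SpecialLinearGroup.transvection hij a) (SpecialLinearGroup.transvection hkl b) := by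
  apply Subtype.ext
  simp only [Matrix.SpecialLinearGroup.coe_mul, SpecialLinearGroup.transvection_coe]
  simp [mul_add, add_mul, hjk, hli, add_comm, add_left_comm]

theorem transvection_zsmul (hij : i ≠ j) (z : ℤ) (a : R) :
    SpecialLinearGroup.transvection hij (z • a) = SpecialLinearGroup.transvection hij a ^ z :=
  map_zpow (MonoidHom.mk' (fun b : Multiplicative R ↦
    SpecialLinearGroup.transvection hij b.toAdd) fun _ _ ↦
      SpecialLinearGroup.transvection_add hij _ _) (Multiplicative.ofAdd a) z

end Transvections

section Bordered

variable {R : Type*} {m : ℕ}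

/-- The matrix with block decomposition `[a, w; v, B]`, where `a` is a scalar. -/
def borderedMatrix (a : R) (w v : Fin m → R) (B : Matrix (Fin m) (Fin m) R) :
    Matrix (Fin (m + 1)) (Fin (m + 1)) R :=
  Matrix.of (Fin.cons (Fin.cons a w) fun i ↦ Fin.cons (v i) (B i))

theorem eq_borderedMatrix (A : Matrix (Fin (m + 1)) (Fin (m + 1)) R) :
    A = borderedMatrix (A 0 0) (fun j ↦ A 0 j.succ) (fun i ↦ A i.succ 0)
      (A.submatrix Fin.succ Fin.succ) := by
  ext i j
  cases i using Fin.cases <;> cases j using Fin.cases <;> rfl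

theorem transpose_borderedMatrix (a : R) (w v : Fin m → R) (B : Matrix (Fin m) (Fin m) R) :
    (borderedMatrix a w v B)ᵀ = borderedMatrix a v w Bᵀ := by
  ext i j
  cases i using Fin.cases <;> cases j using Fin.cases <;> rfl

variable [CommRing R]

theorem borderedMatrix_mul (a a' : R) (w v w' v' : Fin m → R) (B B' : Matrix (Fin m) (Fin m) R) :
    borderedMatrix a w v B * borderedMatrix a' w' v' B' =
      borderedMatrix (a * a' + w ⬝ᵥ v') (a • w' + w ᵥ* B') (a' • v + B *ᵥ v')
        (vecMulVec v w' + B * B') := by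
  ext i j
  cases i using Fin.cases <;> cases j using Fin.cases <;>
    simp [borderedMatrix, mul_apply, Fin.sum_univ_succ, dotProduct, vecMul, mulVec, vecMulVec_apply,
      mul_comm]

theorem borderedMatrix_one : borderedMatrix (1 : R) 0 0 (1 : Matrix (Fin m) (Fin m) R) = 1 := by
  ext i j
  cases i using Fin.cases <;> cases j using Fin.cases <;>
    simp [borderedMatrix, one_apply, Fin.succ_ne_zero, (Fin.succ_ne_zero _).symm]

theorem det_borderedMatrix_of_row_eq_zero (v : Fin m → R) (B : Matrix (Fin m) (Fin m) R) :
    (borderedMatrix 1 0 v B).det = B.det := by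
  rw [det_succ_row_zero, Fin.sum_univ_succ]
  simp only [borderedMatrix, of_apply, Fin.cons_zero, Fin.cons_succ, Pi.zero_apply, mul_zero,
    zero_mul, Finset.sum_const_zero, add_zero, Fin.coe_ofNat_eq_mod, Nat.zero_mod, pow_zero,
    one_mul]
  rfl

end Bordered

section UnipotentBlocks

open scoped MatrixGroups

variable {R : Type*} [CommRing R] {m : ℕ}

/-- The unipotent matrix `[1, 0; v, 1]`. -/
def colUnipotent (v : Fin m → R) : SL(m + 1, R) :=
  ⟨borderedMatrix 1 0 v 1, by rw [det_borderedMatrix_of_row_eq_zero, det_one]⟩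

/-- The unipotent matrix `[1, w; 0, 1]`. -/
def rowUnipotent (w : Fin m → R) : SL(m + 1, R) :=
  ⟨borderedMatrix 1 w 0 1, by
    rw [← det_transpose, transpose_borderedMatrix, det_borderedMatrix_of_row_eq_zero,
      transpose_one, det_one]⟩

/-- The stabilization homomorphism `SL_m → SL_{m+1}`, `A ↦ [1, 0; 0, A]`. -/
def stabilization : SL(m, R) →* SL(m + 1, R) where
  toFun A := ⟨borderedMatrix 1 0 0 A, by rw [det_borderedMatrix_of_row_eq_zero, A.det_coe]⟩
  map_one' := Subtype.ext borderedMatrix_one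
  map_mul' A B := Subtype.ext <| Eq.symm <| (borderedMatrix_mul ..).trans <| by simp

theorem coe_colUnipotent (v : Fin m → R) :
    (colUnipotent v : Matrix (Fin (m + 1)) (Fin (m + 1)) R) = borderedMatrix 1 0 v 1 := rfl

theorem coe_rowUnipotent (w : Fin m → R) :
    (rowUnipotent w : Matrix (Fin (m + 1)) (Fin (m + 1)) R) = borderedMatrix 1 w 0 1 := rfl

theorem coe_stabilization (A : SL(m, R)) :
    (stabilization A : Matrix (Fin (m + 1)) (Fin (m + 1)) R) = borderedMatrix 1 0 0 A := rfl

theorem colUnipotent_add (v v' : Fin m → R) :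
    colUnipotent (v + v') = colUnipotent v * colUnipotent v' :=
  Subtype.ext <| by simp [coe_colUnipotent, borderedMatrix_mul]

theorem rowUnipotent_add (w w' : Fin m → R) :
    rowUnipotent (w + w') = rowUnipotent w * rowUnipotent w' :=
  Subtype.ext <| by simp [coe_rowUnipotent, borderedMatrix_mul, add_comm]

theorem colUnipotent_zero : colUnipotent (0 : Fin m → R) = 1 :=
  Subtype.ext borderedMatrix_one

theorem rowUnipotent_zero : rowUnipotent (0 : Fin m → R) = 1 :=
  Subtype.ext borderedMatrix_one

theorem stabilization_mul_colUnipotent (A : SL(m, R)) (v : Fin m → R) :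
    stabilization A * colUnipotent v =
      colUnipotent ((A : Matrix (Fin m) (Fin m) R) *ᵥ v) * stabilization A :=
  Subtype.ext <| by simp [coe_colUnipotent, coe_stabilization, borderedMatrix_mul]

theorem rowUnipotent_mul_stabilization (A : SL(m, R)) (w : Fin m → R) :
    rowUnipotent w * stabilization A =
      stabilization A * rowUnipotent (w ᵥ* (A : Matrix (Fin m) (Fin m) R)) :=
  Subtype.ext <| by simp [coe_rowUnipotent, coe_stabilization, borderedMatrix_mul]

theorem exists_eq_colUnipotent_mul_stabilization_mul_rowUnipotent {A : SL(m + 1, R)}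
    (h : A 0 0 = 1) : ∃ B : SL(m, R),
      (∀ i j, B i j = A i.succ j.succ - A i.succ 0 * A 0 j.succ) ∧
      A = colUnipotent (fun i ↦ A i.succ 0) * stabilization B *
        rowUnipotent (fun j ↦ A 0 j.succ) := by
  set v := fun i : Fin m ↦ A i.succ 0
  set w := fun j : Fin m ↦ A 0 j.succ
  let B := A.1.submatrix Fin.succ Fin.succ - vecMulVec v w
  have hA : A.1 =
      borderedMatrix 1 0 v 1 * borderedMatrix 1 0 0 B * borderedMatrix 1 w 0 1 := by
    rw [eq_borderedMatrix A.1, h]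
    simp [borderedMatrix_mul, B, v, w]
  have hB : B.det = 1 := by
    have hdet := congr_arg det hA
    rwa [det_mul, det_mul, ← coe_colUnipotent, ← coe_rowUnipotent, A.det_coe,
      (colUnipotent v).det_coe, (rowUnipotent w).det_coe, det_borderedMatrix_of_row_eq_zero,
      one_mul, mul_one, eq_comm] at hdet
  exact ⟨⟨B, hB⟩, fun i j ↦ rfl, Subtype.ext hA⟩

theorem colUnipotent_single (i : Fin m) (t : R) :
    colUnipotent (Pi.single i t) = SpecialLinearGroup.transvection i.succ_ne_zero t := by
  ext k l
  cases k using Fin.cases <;> cases l using Fin.cases <;>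
    simp [coe_colUnipotent, SpecialLinearGroup.transvection_coe, borderedMatrix,
      one_apply, single_apply, Pi.single_apply, eq_comm, Fin.succ_ne_zero]

theorem rowUnipotent_single (j : Fin m) (t : R) :
    rowUnipotent (Pi.single j t) = SpecialLinearGroup.transvection j.succ_ne_zero.symm t := by
  ext k l
  cases k using Fin.cases <;> cases l using Fin.cases <;>
    simp [coe_rowUnipotent, SpecialLinearGroup.transvection_coe, borderedMatrix,
      one_apply, single_apply, Pi.single_apply, eq_comm, Fin.succ_ne_zero]

theorem stabilization_transvection {i j : Fin m} (hij : i ≠ j) (t : R) :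
    stabilization (SpecialLinearGroup.transvection hij t) =
      SpecialLinearGroup.transvection ((Fin.succ_injective m).ne hij) t := by
  ext k l
  cases k using Fin.cases <;> cases l using Fin.cases <;>
    simp [coe_stabilization, SpecialLinearGroup.transvection_coe, borderedMatrix,
      one_apply, single_apply, eq_comm, Fin.succ_ne_zero]

end UnipotentBlocks

section Entries

open scoped MatrixGroups

variable {R : Type*} [CommRing R] {m : ℕ}

theorem mul_colUnipotent_apply_zero (A : SL(m + 1, R)) (v : Fin m → R) (i : Fin (m + 1)) :
    (A * colUnipotent v) i 0 = A i 0 + ∑ j, A i j.succ * v j := by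
  simp [coe_colUnipotent, borderedMatrix, mul_apply, Fin.sum_univ_succ]

theorem mul_colUnipotent_apply_succ (A : SL(m + 1, R)) (v : Fin m → R) (i : Fin (m + 1))
    (j : Fin m) : (A * colUnipotent v) i j.succ = A i j.succ := by
  simp [coe_colUnipotent, borderedMatrix, mul_apply, Fin.sum_univ_succ, one_apply]

theorem mul_rowUnipotent_apply_zero (A : SL(m + 1, R)) (w : Fin m → R) (i : Fin (m + 1)) :
    (A * rowUnipotent w) i 0 = A i 0 := by
  simp [coe_rowUnipotent, borderedMatrix, mul_apply, Fin.sum_univ_succ]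

theorem mul_rowUnipotent_apply_succ (A : SL(m + 1, R)) (w : Fin m → R) (i : Fin (m + 1))
    (j : Fin m) : (A * rowUnipotent w) i j.succ = A i j.succ + A i 0 * w j := by
  simp [coe_rowUnipotent, borderedMatrix, mul_apply, Fin.sum_univ_succ, one_apply, add_comm]

theorem mul_stabilization_apply_zero (A : SL(m + 1, R)) (B : SL(m, R)) (i : Fin (m + 1)) :
    (A * stabilization B) i 0 = A i 0 := by
  simp [coe_stabilization, borderedMatrix, mul_apply, Fin.sum_univ_succ]

theorem mul_stabilization_apply_succ (A : SL(m + 1, R)) (B : SL(m, R)) (i : Fin (m + 1))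
    (j : Fin m) : (A * stabilization B) i j.succ = ∑ k : Fin m, A i k.succ * B k j := by
  simp [coe_stabilization, borderedMatrix, mul_apply, Fin.sum_univ_succ]

theorem exists_sum_mul_eq_one (A : SL(m, R)) (i : Fin m) : ∃ x : Fin m → R, ∑ j, A i j * x j = 1 :=
  ⟨fun j ↦ A⁻¹ j i, by
    rw [← mul_apply, ← Matrix.SpecialLinearGroup.coe_mul, mul_inv_cancel,
      Matrix.SpecialLinearGroup.coe_one, one_apply_eq]⟩

end Entries

section Reduction

open scoped MatrixGroups

variable {R S : Type*} [CommRing R] [CommRing S] {m : ℕ}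

theorem map_colUnipotent (f : R →+* S) (v : Fin m → R) :
    SpecialLinearGroup.map f (colUnipotent v) = colUnipotent (f ∘ v) := by
  ext i j
  cases i using Fin.cases <;> cases j using Fin.cases <;>
    simp [coe_colUnipotent, borderedMatrix, one_apply, apply_ite f]

theorem map_rowUnipotent (f : R →+* S) (w : Fin m → R) :
    SpecialLinearGroup.map f (rowUnipotent w) = rowUnipotent (f ∘ w) := by
  ext i j
  cases i using Fin.cases <;> cases j using Fin.cases <;>
    simp [coe_rowUnipotent, borderedMatrix, one_apply, apply_ite f]

theorem map_stabilization (f : R →+* S) (A : SL(m, R)) :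
    SpecialLinearGroup.map f (stabilization A) = stabilization (SpecialLinearGroup.map f A) := by
  ext i j
  cases i using Fin.cases <;> cases j using Fin.cases <;>
    simp [coe_stabilization, borderedMatrix]

theorem exists_isUnit_mul_colUnipotent_apply_zero [Finite (MaximalSpectrum R)]
    (A : SL(m + 1, R)) : ∃ v : Fin m → R, IsUnit ((A * colUnipotent v) 0 0) := by
  obtain ⟨x, hx⟩ := exists_sum_mul_eq_one A 0
  rw [Fin.sum_univ_succ] at hx
  obtain ⟨s, hs⟩ := exists_isUnit_add_mul_of_isCoprime (a := A 0 0)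
    (c := ∑ j : Fin m, A 0 j.succ * x j.succ) ⟨x 0, 1, by rw [mul_comm, one_mul, hx]⟩
  refine ⟨fun j ↦ s * x j.succ, ?_⟩
  rw [mul_colUnipotent_apply_zero]
  convert hs using 2
  rw [Finset.mul_sum]
  exact Finset.sum_congr rfl fun j _ ↦ mul_left_comm ..

theorem exists_mul_apply_zero_eq_one [Finite (MaximalSpectrum R)] (A : SL(m + 1, R)) :
    ∃ v w v' : Fin m → R, (A * colUnipotent v * rowUnipotent w * colUnipotent v') 0 0 = 1 := by
  obtain ⟨v, u, hu⟩ := exists_isUnit_mul_colUnipotent_apply_zero A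
  cases m with
  | zero =>
    refine ⟨0, 0, 0, ?_⟩
    rw [← det_fin_one (A * _ * _ * _).1, Matrix.SpecialLinearGroup.det_coe]
  | succ m =>
    refine ⟨v, Pi.single 0 (u⁻¹ * (1 - (A * colUnipotent v) 0 1)), Pi.single 0 (1 - u), ?_⟩
    rw [mul_colUnipotent_apply_zero, Fin.sum_univ_succ, mul_rowUnipotent_apply_zero,
      mul_rowUnipotent_apply_succ, ← hu]
    simp

theorem specialLinearGroup_map_surjective [Finite (MaximalSpectrum S)] {f : R →+* S}
    (hf : Function.Surjective f) :
    Function.Surjective (SpecialLinearGroup.map f : SL(m, R) →* SL(m, S)) := by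
  rw [← MonoidHom.range_eq_top, eq_top_iff]
  induction m with
  | zero => exact fun A _ ↦ ⟨1, Subsingleton.elim _ _⟩
  | succ m ih =>
    have hcol (v : Fin m → S) : colUnipotent v ∈ (SpecialLinearGroup.map f).range :=
      ⟨colUnipotent (Function.surjInv hf ∘ v), by
        rw [map_colUnipotent, ← Function.comp_assoc, (Function.rightInverse_surjInv hf).id,
          Function.id_comp]⟩
    have hrow (w : Fin m → S) : rowUnipotent w ∈ (SpecialLinearGroup.map f).range :=
      ⟨rowUnipotent (Function.surjInv hf ∘ w), by
        rw [map_rowUnipotent, ← Function.comp_assoc, (Function.rightInverse_surjInv hf).id,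
          Function.id_comp]⟩
    intro A _
    obtain ⟨v, w, v', h⟩ := exists_mul_apply_zero_eq_one A
    obtain ⟨B, -, hB⟩ := exists_eq_colUnipotent_mul_stabilization_mul_rowUnipotent h
    obtain ⟨B', rfl⟩ := ih (Subgroup.mem_top B)
    rw [← Subgroup.mul_mem_cancel_right _ (hcol v), ← Subgroup.mul_mem_cancel_right _ (hrow w),
      ← Subgroup.mul_mem_cancel_right _ (hcol v'), hB]
    exact mul_mem (mul_mem (hcol _) ⟨stabilization B', map_stabilization f B'⟩) (hrow _)

end Reduction

section RelativeSubgroups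

variable (ι : Type*) {R S : Type*} [Fintype ι] [DecidableEq ι] [CommRing R] [CommRing S]

/-- The principal congruence subgroup `Γ(I)`: the matrices of determinant one that are congruent to
the identity modulo the ideal `I`. -/
def principalCongruenceSubgroup (I : Ideal R) : Subgroup (SpecialLinearGroup ι R) :=
  (SpecialLinearGroup.map (Ideal.Quotient.mk I)).ker

/-- The relative elementary subgroup `E(I)`: the normal closure in the special linear group of the
transvections with coefficient in the ideal `I`. -/
def elementarySubgroup (I : Ideal R) : Subgroup (SpecialLinearGroup ι R) :=
  Subgroup.normalClosure
    {A | ∃ (i j : ι) (hij : i ≠ j), ∃ b ∈ I, SpecialLinearGroup.transvection hij b = A}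

instance (I : Ideal R) : (principalCongruenceSubgroup ι I).Normal :=
  MonoidHom.normal_ker _

instance (I : Ideal R) : (elementarySubgroup ι I).Normal :=
  Subgroup.normalClosure_normal

variable {ι}

theorem mem_ker_map_iff {f : R →+* S} {A : SpecialLinearGroup ι R} :
    A ∈ (SpecialLinearGroup.map f).ker ↔
      ∀ i j, A i j - (1 : Matrix ι ι R) i j ∈ RingHom.ker f := by
  simp_rw [MonoidHom.mem_ker, Matrix.SpecialLinearGroup.ext_iff, RingHom.mem_ker, map_sub,
    sub_eq_zero]
  simp [one_apply, apply_ite f]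

theorem mem_principalCongruenceSubgroup_iff {I : Ideal R} {A : SpecialLinearGroup ι R} :
    A ∈ principalCongruenceSubgroup ι I ↔ ∀ i j, A i j - (1 : Matrix ι ι R) i j ∈ I := by
  rw [principalCongruenceSubgroup, mem_ker_map_iff, Ideal.mk_ker]

theorem transvection_mem_elementarySubgroup {I : Ideal R} {i j : ι} (hij : i ≠ j) {b : R}
    (hb : b ∈ I) : SpecialLinearGroup.transvection hij b ∈ elementarySubgroup ι I :=
  Subgroup.subset_normalClosure ⟨i, j, hij, b, hb, rfl⟩

theorem elementarySubgroup_le {I : Ideal R} {N : Subgroup (SpecialLinearGroup ι R)} [N.Normal]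
    (h : ∀ (i j : ι) (hij : i ≠ j), ∀ b ∈ I, SpecialLinearGroup.transvection hij b ∈ N) :
    elementarySubgroup ι I ≤ N :=
  Subgroup.normalClosure_le_normal <| by
    rintro _ ⟨i, j, hij, b, hb, rfl⟩
    exact h i j hij b hb

theorem elementarySubgroup_le_principalCongruenceSubgroup (I : Ideal R) :
    elementarySubgroup ι I ≤ principalCongruenceSubgroup ι I :=
  elementarySubgroup_le fun i j hij b hb ↦ mem_principalCongruenceSubgroup_iff.2 fun k l ↦ by
    rw [SpecialLinearGroup.transvection_coe, Matrix.add_apply, add_sub_cancel_left, single_apply]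
    split_ifs
    exacts [hb, I.zero_mem]

open scoped MatrixGroups

variable {m : ℕ} {I : Ideal R}

theorem elementarySubgroup_le_comap_stabilization :
    elementarySubgroup (Fin m) I ≤ (elementarySubgroup (Fin (m + 1)) I).comap stabilization :=
  elementarySubgroup_le fun i j hij b hb ↦ by
    rw [Subgroup.mem_comap, stabilization_transvection]
    exact transvection_mem_elementarySubgroup _ hb

theorem colUnipotent_mem_elementarySubgroup {v : Fin m → R} (hv : ∀ i, v i ∈ I) :
    colUnipotent v ∈ elementarySubgroup (Fin (m + 1)) I := by
  rw [← Finset.univ_sum_single v]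
  refine Finset.sum_induction _ (fun v ↦ colUnipotent v ∈ elementarySubgroup (Fin (m + 1)) I)
    (fun v v' hv hv' ↦ ?_) ?_ fun i _ ↦ ?_
  · exact colUnipotent_add v v' ▸ mul_mem hv hv'
  · exact colUnipotent_zero (R := R) ▸ one_mem _
  · exact colUnipotent_single i (v i) ▸ transvection_mem_elementarySubgroup _ (hv i)

theorem rowUnipotent_mem_elementarySubgroup {w : Fin m → R} (hw : ∀ j, w j ∈ I) :
    rowUnipotent w ∈ elementarySubgroup (Fin (m + 1)) I := by
  rw [← Finset.univ_sum_single w]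
  refine Finset.sum_induction _ (fun w ↦ rowUnipotent w ∈ elementarySubgroup (Fin (m + 1)) I)
    (fun w w' hw hw' ↦ ?_) ?_ fun j _ ↦ ?_
  · exact rowUnipotent_add w w' ▸ mul_mem hw hw'
  · exact rowUnipotent_zero (R := R) ▸ one_mem _
  · exact rowUnipotent_single j (w j) ▸ transvection_mem_elementarySubgroup _ (hw j)

end RelativeSubgroups

section Commutation

open scoped MatrixGroups

variable {R H : Type*} [CommRing R] [Group H] {m : ℕ} {I : Ideal R} {π : SL(m + 1, R) →* H}
  {A : SL(m, R)}

theorem map_stabilization_eq_one (hπ : elementarySubgroup (Fin (m + 1)) I ≤ π.ker)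
    (hA : A ∈ elementarySubgroup (Fin m) I) : π (stabilization A) = 1 :=
  hπ (elementarySubgroup_le_comap_stabilization hA)

theorem commute_map_stabilization_map_colUnipotent
    (hπ : elementarySubgroup (Fin (m + 1)) I ≤ π.ker)
    (hA : A ∈ principalCongruenceSubgroup (Fin m) I) (v : Fin m → R) :
    Commute (π (stabilization A)) (π (colUnipotent v)) := by
  rw [mem_principalCongruenceSubgroup_iff] at hA
  have hv : π (colUnipotent ((A.1 - 1) *ᵥ v)) = 1 :=
    hπ (colUnipotent_mem_elementarySubgroup fun i ↦
      (sum_mem fun j _ ↦ I.mul_mem_right _ (hA i j) : ∑ j, (A.1 - 1) i j * v j ∈ I))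
  have hAv : A.1 *ᵥ v = (A.1 - 1) *ᵥ v + v := by rw [sub_mulVec, one_mulVec, sub_add_cancel]
  rw [commute_iff_eq, ← map_mul, ← map_mul, stabilization_mul_colUnipotent, hAv, colUnipotent_add,
    map_mul, map_mul, hv, one_mul, ← map_mul]

theorem commute_map_stabilization_map_rowUnipotent
    (hπ : elementarySubgroup (Fin (m + 1)) I ≤ π.ker)
    (hA : A ∈ principalCongruenceSubgroup (Fin m) I) (w : Fin m → R) :
    Commute (π (stabilization A)) (π (rowUnipotent w)) := by
  rw [mem_principalCongruenceSubgroup_iff] at hA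
  have hw : π (rowUnipotent (w ᵥ* (A.1 - 1))) = 1 :=
    hπ (rowUnipotent_mem_elementarySubgroup fun j ↦
      (sum_mem fun i _ ↦ I.mul_mem_left _ (hA i j) : ∑ i, w i * (A.1 - 1) i j ∈ I))
  have hwA : w ᵥ* A.1 = w + w ᵥ* (A.1 - 1) := by rw [vecMul_sub, vecMul_one, add_sub_cancel]
  rw [commute_iff_eq, eq_comm, ← map_mul, ← map_mul, rowUnipotent_mul_stabilization, hwA,
    rowUnipotent_add, map_mul, map_mul, hw, mul_one, ← map_mul]

end Commutation

section MennickeSymbol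

variable {R H : Type*} [CommRing R] [Group H]

/-- Mennicke symbols on pairs congruent to `(1, 0)` modulo the ideal `I`. The symbol is encoded as a
total function `F`, of which only the values at the coprime pairs `(a, b)` with `a - 1 ∈ I` and
`b ∈ I` are meaningful. -/
structure IsMennickeSymbol (I : Ideal R) (F : R → R → H) : Prop where
  one_left {b : R} (hb : b ∈ I) : F 1 b = 1
  add_mul_left {a b : R} (ha : a - 1 ∈ I) (hb : b ∈ I) (hab : IsCoprime a b) (t : R) :
    F (a + t * b) b = F a b
  add_mul_right {a b : R} (ha : a - 1 ∈ I) (hb : b ∈ I) (hab : IsCoprime a b) {t : R}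
    (ht : t ∈ I) : F a (b + t * a) = F a b
  mul {a b c : R} (ha : a - 1 ∈ I) (hb : b ∈ I) (hc : c ∈ I) (hab : IsCoprime a b)
    (hac : IsCoprime a c) : F a b * F a c = F a (b * c)

namespace IsMennickeSymbol

theorem pow_eq {I : Ideal R} {F : R → R → H} (hF : IsMennickeSymbol I F) {a b : R}
    (ha : a - 1 ∈ I) (hb : b ∈ I) (hab : IsCoprime a b) {k : ℕ} (hk : k ≠ 0) :
    F a b ^ k = F a (b ^ k) := by
  induction k, Nat.one_le_iff_ne_zero.2 hk using Nat.le_induction with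
  | base => rw [pow_one, pow_one]
  | succ k hpos ih =>
    rw [pow_succ, ih (Nat.one_le_iff_ne_zero.1 hpos),
      hF.mul ha (I.pow_mem_of_mem hb k hpos) hb hab.pow_right hab, ← pow_succ]

theorem eq_one_of_dvd_sub {q : R} {F : R → R → H} (hF : IsMennickeSymbol (Ideal.span {q}) F)
    {a b e : R} (ha : a - 1 ∈ Ideal.span {q}) (hb : b ∈ Ideal.span {q}) (he : IsUnit e)
    (hbe : a ∣ b - e) : F a b = 1 := by
  have hq : q ∈ Ideal.span {q} := Ideal.mem_span_singleton_self q
  have h1 : (1 : R) - 1 ∈ Ideal.span {q} := by simp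
  have hmul_unit {e : R} (he : IsUnit e) : IsCoprime a (q * e) ∧ F a (q * e) = 1 := by
    obtain ⟨t, ht⟩ := Ideal.mem_span_singleton.1 ha
    obtain ⟨e', he'⟩ := he.exists_left_inv
    have hqe := Ideal.mul_mem_right e _ hq
    obtain rfl : a = 1 + t * e' * (q * e) := by linear_combination ht - q * t * he'
    exact ⟨isCoprime_one_left.add_mul_right_left _,
      by rw [hF.add_mul_left h1 hqe isCoprime_one_left, hF.one_left hqe]⟩
  obtain ⟨haq, hFq⟩ := hmul_unit isUnit_one
  obtain ⟨haqe, hFqe⟩ := hmul_unit he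
  rw [mul_one] at haq hFq
  obtain ⟨s, hs⟩ := hbe
  have hab : IsCoprime a b := by
    rw [← sub_add_cancel b e, hs, add_comm]
    exact (IsCoprime.of_isCoprime_of_dvd_right haqe (Dvd.intro_left q rfl)).add_mul_left_right s
  have hqb : q * b = q * e + q * s * a := by linear_combination q * hs
  rw [← one_mul (F a b), ← hFq, hF.mul ha hq hb haq hab, hqb,
    hF.add_mul_right ha (Ideal.mul_mem_right e _ hq) haqe (Ideal.mul_mem_right s _ hq), hFqe, hFq]

end IsMennickeSymbol

end MennickeSymbol

section IntegralMennickeSymbol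

theorem exists_prime_dvd_sub {a b : ℤ} (hb : b ≠ 0) (hab : IsCoprime a b) :
    ∃ p : ℕ, p.Prime ∧ b ∣ p - a := by
  obtain ⟨p, -, hp, hpa⟩ := Nat.forall_exists_prime_gt_and_zmodEq 0 (Int.natAbs_ne_zero.2 hb)
    (by rwa [Int.natCast_natAbs, IsCoprime.abs_right_iff])
  exact ⟨p, hp, by simpa using hpa.symm.dvd⟩

theorem exists_prime_dvd_add_and_dvd_add_one {a b m : ℤ} (hb : b ≠ 0) (hm : m ≠ 0)
    (hab : IsCoprime a b) (hbm : IsCoprime b m) :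
    ∃ p : ℕ, p.Prime ∧ b ∣ p + a ∧ m ∣ p + 1 := by
  obtain ⟨u, v, huv⟩ := hbm
  have hcoprime : IsCoprime (-(a * (v * m) + u * b)) (b * m) := by
    refine (IsCoprime.mul_right ?_ ?_).neg_left
    · obtain ⟨x, y, hxy⟩ := hab
      exact ⟨x, y + x * a * u - x * u, by linear_combination hxy + x * a * huv⟩
    · exact ⟨1, (1 - a) * v, by linear_combination huv⟩
  obtain ⟨p, hp, hdvd⟩ := exists_prime_dvd_sub (mul_ne_zero hb hm) hcoprime
  refine ⟨p, hp, ?_, ?_⟩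
  · obtain ⟨k, hk⟩ := dvd_of_mul_right_dvd hdvd
    exact ⟨k + a * u - u, by linear_combination hk - a * huv⟩
  · obtain ⟨k, hk⟩ := dvd_of_mul_left_dvd hdvd
    exact ⟨k + (1 - a) * v, by linear_combination hk - huv⟩

variable {H : Type*} [Group H] {q : ℤ} {F : ℤ → ℤ → H}

theorem two_mul_half_add_one_and_odd_half (hq : 4 ∣ q) {p : ℕ}
    (hp : (-p : ℤ) - 1 ∈ Ideal.span {q}) :
    2 * (p / 2) + 1 = p ∧ Odd (p / 2) := by
  have := hq.trans (Ideal.mem_span_singleton.1 hp)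
  rw [Nat.odd_iff]
  omega

namespace IsMennickeSymbol

theorem neg_prime_pow_half_eq_one (hF : IsMennickeSymbol (Ideal.span {q}) F) {p : ℕ}
    (hp : p.Prime) (hpq : (-p : ℤ) - 1 ∈ Ideal.span {q}) {b : ℤ} (hb : b ∈ Ideal.span {q})
    (hpb : IsCoprime (-p : ℤ) b) : F (-p) b ^ (p / 2) = 1 := by
  have : Fact p.Prime := ⟨hp⟩
  have hp2 : p / 2 ≠ 0 := (Nat.div_pos hp.two_le two_pos).ne'
  have hb0 : (b : ZMod p) ≠ 0 := fun h ↦ (Nat.prime_iff_prime_int.1 hp).not_isUnit <|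
    hpb.neg_left.isUnit_of_dvd' (by simp) ((ZMod.intCast_zmod_eq_zero_iff_dvd b p).1 h)
  obtain ⟨e, he, hbe⟩ : ∃ e : ℤ, IsUnit e ∧ (p : ℤ) ∣ b ^ (p / 2) - e := by
    simp_rw [← ZMod.intCast_zmod_eq_zero_iff_dvd, Int.cast_sub, Int.cast_pow, sub_eq_zero]
    rcases ZMod.pow_div_two_eq_neg_one_or_one p hb0 with h | h
    · exact ⟨1, isUnit_one, by rw [h, Int.cast_one]⟩
    · exact ⟨-1, isUnit_one.neg, by rw [h, Int.cast_neg, Int.cast_one]⟩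
  rw [hF.pow_eq hpq hb hpb hp2]
  exact hF.eq_one_of_dvd_sub hpq (Ideal.pow_mem_of_mem _ hb _ (Nat.pos_of_ne_zero hp2)) he
    (neg_dvd.2 hbe)

theorem exists_isCoprime_half_apply_neg_prime_eq (hF : IsMennickeSymbol (Ideal.span {q}) F)
    (hq : 4 ∣ q) {p : ℕ} (hp : p.Prime) (hpq : (-p : ℤ) - 1 ∈ Ideal.span {q}) {b : ℤ}
    (hb : b ∈ Ideal.span {q}) (hpb : IsCoprime (-p : ℤ) b) :
    ∃ c ∈ Ideal.span {q}, c ≠ 0 ∧ IsCoprime (-p : ℤ) c ∧ IsCoprime c ((p / 2 : ℕ) : ℤ) ∧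
      F (-p) c = F (-p) b := by
  obtain ⟨hp', hodd⟩ := two_mul_half_add_one_and_odd_half hq hpq
  have : Finite (MaximalSpectrum (ℤ ⧸ Ideal.span {((p / 2 : ℕ) : ℤ)})) :=
    finite_maximalSpectrum_int_quotient (Nat.cast_ne_zero.2 hodd.pos.ne')
  obtain ⟨x, z, hxz⟩ : IsCoprime ((p / 2 : ℕ) : ℤ) (q * p) := by
    generalize p / 2 = h at *
    obtain ⟨j, rfl⟩ := hodd
    obtain ⟨k, hk⟩ := Ideal.mem_span_singleton.1 hpq
    have h2 : IsCoprime ((2 * j + 1 : ℕ) : ℤ) 2 := ⟨1, -j, by push_cast; ring⟩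
    subst hp'
    push_cast at hk h2 ⊢
    obtain ⟨u, v, huv⟩ := h2
    exact IsCoprime.mul_right ⟨u - v * 2, -v * k, by linear_combination huv + v * hk⟩
      ⟨-2, 1, by ring⟩
  obtain ⟨s, hs⟩ :=
    exists_isCoprime_add_mul (b := b) ⟨x, 0, z, by rw [zero_mul, add_zero, hxz]⟩
  have hsq : -(s * q) ∈ Ideal.span {q} :=
    neg_mem (Ideal.mul_mem_left _ _ (Ideal.mem_span_singleton_self q))
  have hc : b + s * (q * p) = b + -(s * q) * -p := by ring
  rw [hc] at hs
  have hpc : IsCoprime (-p : ℤ) (b + -(s * q) * -p) := hpb.add_mul_right_right _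
  refine ⟨_, add_mem hb (Ideal.mul_mem_right _ _ hsq), fun h0 ↦ ?_, hpc, hs.symm,
    hF.add_mul_right hpq hb hpb hsq⟩
  rw [h0, isCoprime_zero_right, IsUnit.neg_iff] at hpc
  exact (Nat.prime_iff_prime_int.1 hp).not_isUnit hpc

theorem exists_prime_apply_neg_eq (hF : IsMennickeSymbol (Ideal.span {q}) F) {a b m : ℤ}
    (ha : a - 1 ∈ Ideal.span {q}) (hb : b ∈ Ideal.span {q}) (hab : IsCoprime a b) (hb0 : b ≠ 0)
    (hm0 : m ≠ 0) (hbm : IsCoprime b m) :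
    ∃ p : ℕ, p.Prime ∧ m ∣ p + 1 ∧ (-p : ℤ) - 1 ∈ Ideal.span {q} ∧ IsCoprime (-p : ℤ) b ∧
      F (-p) b = F a b ∧ F a b ^ (p / 2) = 1 := by
  obtain ⟨p, hp, ⟨k, hk⟩, hpm⟩ := exists_prime_dvd_add_and_dvd_add_one hb0 hm0 hab hbm
  have hpa : (-p : ℤ) = a + -k * b := by linear_combination -hk
  have hpq : (-p : ℤ) - 1 ∈ Ideal.span {q} := by
    rw [hpa, add_sub_right_comm]
    exact add_mem ha (Ideal.mul_mem_left _ _ hb)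
  have hpb : IsCoprime (-p : ℤ) b := hpa ▸ hab.add_mul_right_left (-k)
  have hFp : F (-p) b = F a b := by rw [hpa, hF.add_mul_left ha hb hab]
  exact ⟨p, hp, hpm, hpq, hpb, hFp, hFp ▸ hF.neg_prime_pow_half_eq_one hp hpq hb hpb⟩

theorem eq_one_of_four_dvd (hF : IsMennickeSymbol (Ideal.span {q}) F) (hq : 4 ∣ q) {a b : ℤ}
    (ha : a - 1 ∈ Ideal.span {q}) (hb : b ∈ Ideal.span {q}) (hab : IsCoprime a b) :
    F a b = 1 := by
  rcases eq_or_ne b 0 with rfl | hb0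
  · obtain rfl | rfl := Int.isUnit_iff.1 (isCoprime_zero_right.1 hab)
    · exact hF.one_left hb
    · exact absurd (hq.trans (Ideal.mem_span_singleton.1 ha)) (by decide)
  -- Two primes with coprime halves both compute the symbol, so its order divides `1`.
  obtain ⟨p, hp, -, hpq, hpb, hFp, hpow⟩ :=
    hF.exists_prime_apply_neg_eq ha hb hab hb0 one_ne_zero isCoprime_one_right
  obtain ⟨-, hodd⟩ := two_mul_half_add_one_and_odd_half hq hpq
  obtain ⟨c, hc, hc0, hpc, hcp, hFc⟩ :=
    hF.exists_isCoprime_half_apply_neg_prime_eq hq hp hpq hb hpb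
  obtain ⟨r, -, hpr, hrq, -, -, hpow'⟩ :=
    hF.exists_prime_apply_neg_eq hpq hc hpc hc0 (Nat.cast_ne_zero.2 hodd.pos.ne') hcp
  obtain ⟨hr, -⟩ := two_mul_half_add_one_and_odd_half hq hrq
  rw [hFc, hFp] at hpow'
  have hcoprime : (p / 2).Coprime (r / 2) := by
    have hdvd : p / 2 ∣ 2 * (r / 2 + 1) := by
      rw [show 2 * (r / 2 + 1) = r + 1 by omega]
      exact_mod_cast hpr
    have hdvd' : p / 2 ∣ r / 2 + 1 := (Nat.coprime_two_right.2 hodd).dvd_of_dvd_mul_left hdvd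
    exact Nat.Coprime.of_dvd_left hdvd' (by simp)
  simpa only [hcoprime.gcd_eq_one, pow_one] using pow_gcd_eq_one.2 ⟨hpow, hpow'⟩

end IsMennickeSymbol

end IntegralMennickeSymbol

section TransvectionCommutation

open scoped MatrixGroups commutatorElement

variable {R H : Type*} [CommRing R] [Group H] {m : ℕ} {I : Ideal R} {π : SL(m + 1, R) →* H}
  {A : SL(m, R)}

theorem commute_map_stabilization_map_transvection
    (hπ : elementarySubgroup (Fin (m + 1)) I ≤ π.ker)
    (hA : A ∈ principalCongruenceSubgroup (Fin m) I) {i j : Fin (m + 1)} (hij : i ≠ j) (t : R) :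
    Commute (π (stabilization A)) (π (SpecialLinearGroup.transvection hij t)) := by
  have hcol := commute_map_stabilization_map_colUnipotent hπ hA
  have hrow := commute_map_stabilization_map_rowUnipotent hπ hA
  cases i using Fin.cases with
  | zero =>
    obtain ⟨j, rfl⟩ := Fin.exists_succ_eq.2 hij.symm
    exact rowUnipotent_single j t ▸ hrow _
  | succ i =>
    cases j using Fin.cases with
    | zero => exact colUnipotent_single i t ▸ hcol _
    | succ j =>
      rw [← mul_one t, ← commutatorElement_transvection hij i.succ_ne_zero j.succ_ne_zero.symm t 1,
        ← colUnipotent_single, ← rowUnipotent_single, map_commutatorElement]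
      exact Commute.mul_right (((hcol _).mul_right (hrow _)).mul_right (hcol _).inv_right)
        (hrow _).inv_right

end TransvectionCommutation

section RankTwoBlocks

open scoped MatrixGroups

theorem borderedMatrix_fin_two {R : Type*} (a : R) (w v : Fin 2 → R)
    (B : Matrix (Fin 2) (Fin 2) R) :
    borderedMatrix a w v B = !![a, w 0, w 1; v 0, B 0 0, B 0 1; v 1, B 1 0, B 1 1] := by
  ext i j
  fin_cases i <;> fin_cases j <;> rfl

variable {R : Type*} [CommRing R]

theorem mul_sub_mul_eq_one (A : SL(2, R)) : A 0 0 * A 1 1 - A 0 1 * A 1 0 = 1 :=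
  (det_fin_two A.1).symm.trans A.det_coe

/-- The embedding of `A` in the rows and columns `0` and `1` of a matrix of size three. -/
def upperBlock (A : SL(2, R)) : SL(2 + 1, R) :=
  ⟨!![A 0 0, A 0 1, 0; A 1 0, A 1 1, 0; 0, 0, 1], by
    simpa [det_fin_three] using mul_sub_mul_eq_one A⟩

/-- The embedding of `A` in the rows and columns `0` and `2` of a matrix of size three. -/
def outerBlock (A : SL(2, R)) : SL(2 + 1, R) :=
  ⟨!![A 0 0, 0, A 0 1; 0, 1, 0; A 1 0, 0, A 1 1], by
    simpa [det_fin_three] using mul_sub_mul_eq_one A⟩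

theorem coe_upperBlock (A : SL(2, R)) :
    (upperBlock A).1 = !![A 0 0, A 0 1, 0; A 1 0, A 1 1, 0; 0, 0, 1] := rfl

theorem coe_outerBlock (A : SL(2, R)) :
    (outerBlock A).1 = !![A 0 0, 0, A 0 1; 0, 1, 0; A 1 0, 0, A 1 1] := rfl

/-- The Weyl element `e₀ᵢ(u) eᵢ₀(-u⁻¹) e₀ᵢ(u)`, where `i : Fin m` numbers the coordinates other
than `0`; it exchanges the two coordinates up to units. -/
def weylElement {m : ℕ} (i : Fin m) (u : Rˣ) : SL(m + 1, R) :=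
  rowUnipotent (Pi.single i (u : R)) * colUnipotent (Pi.single i (-(u⁻¹ : Rˣ) : R)) *
    rowUnipotent (Pi.single i (u : R))

theorem coe_weylElement_zero :
    (weylElement (0 : Fin 2) (1 : Rˣ)).1 = !![0, 1, 0; -1, 0, 0; 0, 0, 1] := by
  simp only [weylElement, Matrix.SpecialLinearGroup.coe_mul, coe_rowUnipotent, coe_colUnipotent,
    borderedMatrix_fin_two]
  ext i j
  fin_cases i <;> fin_cases j <;> simp [mul_apply, Fin.sum_univ_succ]

theorem coe_weylElement_one :
    (weylElement (1 : Fin 2) (-1 : Rˣ)).1 = !![0, 0, -1; 0, 1, 0; 1, 0, 0] := by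
  simp only [weylElement, Matrix.SpecialLinearGroup.coe_mul, coe_rowUnipotent, coe_colUnipotent,
    borderedMatrix_fin_two]
  ext i j
  fin_cases i <;> fin_cases j <;> simp [mul_apply, Fin.sum_univ_succ]

theorem weylElement_mul_stabilization (A : SL(2, R)) :
    weylElement 0 1 * stabilization A = outerBlock A * weylElement 0 1 := by
  apply Subtype.ext
  simp only [Matrix.SpecialLinearGroup.coe_mul, coe_outerBlock, coe_weylElement_zero,
    coe_stabilization, borderedMatrix_fin_two]
  ext i j
  fin_cases i <;> fin_cases j <;> simp [mul_apply, Fin.sum_univ_succ]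

theorem weylElement_mul_weylElement_mul_stabilization (A : SL(2, R)) :
    weylElement 0 1 * weylElement 1 (-1) * stabilization A =
      upperBlock A * (weylElement 0 1 * weylElement 1 (-1)) := by
  apply Subtype.ext
  simp only [Matrix.SpecialLinearGroup.coe_mul, coe_upperBlock, coe_weylElement_zero,
    coe_weylElement_one, coe_stabilization, borderedMatrix_fin_two]
  ext i j
  fin_cases i <;> fin_cases j <;> simp [mul_apply, Fin.sum_univ_succ]

theorem upperBlock_mul_stabilization_mul_rowUnipotent {A B C : SL(2, R)} (hB : B 0 0 = A 0 0)
    (hC : C 0 0 = A 0 0) (hABC : C 0 1 = A 0 1 * B 0 1) :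
    upperBlock A * stabilization B * rowUnipotent ![-A 0 1, 0] =
      colUnipotent ![A 1 0 * C 1 1 - A 1 1 * B 0 1 * C 1 0, -B 1 1 * C 1 0] *
        stabilization (colUnipotent ![B 1 0] * rowUnipotent ![B 0 1]) * outerBlock C := by
  have hA' := mul_sub_mul_eq_one A
  have hB' := mul_sub_mul_eq_one B
  have hC' := mul_sub_mul_eq_one C
  rw [hB] at hB'
  rw [hC, hABC] at hC'
  apply Subtype.ext
  simp only [map_mul, Matrix.SpecialLinearGroup.coe_mul, coe_upperBlock, coe_outerBlock,
    coe_stabilization, coe_rowUnipotent, coe_colUnipotent, borderedMatrix_fin_two]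
  ext i j
  fin_cases i <;> fin_cases j <;>
    simp [mul_apply, Fin.sum_univ_succ, hB, hC, hABC, borderedMatrix]
  · ring
  · linear_combination -A 1 0 * hC' + B 0 1 * C 1 0 * hA'
  · linear_combination hA'
  · linear_combination -A 1 1 * B 0 1 * hC' + B 0 1 * C 1 1 * hA'
  · linear_combination C 1 0 * hB'
  · linear_combination -B 1 1 * hC' + C 1 1 * hB'

end RankTwoBlocks

section MennickeSymbolOfHom

open scoped MatrixGroups

variable {R H : Type*} [CommRing R] [Group H] {I : Ideal R} {π : SL(2 + 1, R) →* H}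

theorem eq_transvection_mul_of_row_eq {A B : SL(2, R)} (h₀ : A 0 0 = B 0 0)
    (h₁ : A 0 1 = B 0 1) :
    A = SpecialLinearGroup.transvection one_ne_zero (A 1 0 * B 1 1 - A 1 1 * B 1 0) * B := by
  have hA := mul_sub_mul_eq_one A
  have hB := mul_sub_mul_eq_one B
  rw [h₀, h₁] at hA
  apply Subtype.ext
  ext i j
  fin_cases i <;> fin_cases j <;>
    simp only [Fin.zero_eta, Fin.mk_one, Matrix.SpecialLinearGroup.coe_mul, h₀, h₁,
      SpecialLinearGroup.transvection_coe, mul_apply, Matrix.add_apply, one_apply, single_apply,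
      Fin.sum_univ_two, true_and, false_and, ↓reduceIte, zero_ne_one, one_ne_zero,
      zero_add, add_zero, one_mul, zero_mul]
  · linear_combination B 1 0 * hA - A 1 0 * hB
  · linear_combination B 1 1 * hA - A 1 1 * hB

theorem exists_mem_principalCongruenceSubgroup_row_eq {a b : R} (ha : a - 1 ∈ I) (hb : b ∈ I)
    (hab : IsCoprime a b) :
    ∃ A ∈ principalCongruenceSubgroup (Fin 2) I, A 0 0 = a ∧ A 0 1 = b := by
  obtain ⟨x, y, hxy⟩ := hab
  have hdet : (!![a, b; -(y * y * b), x + x * y * b]).det = 1 := by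
    rw [det_fin_two_of]
    linear_combination (1 + y * b) * hxy
  have hx : x - 1 ∈ I := by
    rw [show x - 1 = -(x * (a - 1) + y * b) by linear_combination hxy]
    exact neg_mem (add_mem (I.mul_mem_left x ha) (I.mul_mem_left y hb))
  refine ⟨⟨_, hdet⟩, mem_principalCongruenceSubgroup_iff.2 fun i j ↦ ?_, rfl, rfl⟩
  fin_cases i <;> fin_cases j
  · exact ha
  · simpa using hb
  · simpa using I.mul_mem_left (y * y) hb
  · simpa [add_sub_right_comm] using add_mem hx (I.mul_mem_left (x * y) hb)

theorem map_stabilization_eq_of_row_eq (hπ : elementarySubgroup (Fin (2 + 1)) I ≤ π.ker)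
    {A B : SL(2, R)} (hA : A ∈ principalCongruenceSubgroup (Fin 2) I)
    (hB : B ∈ principalCongruenceSubgroup (Fin 2) I) (h₀ : A 0 0 = B 0 0) (h₁ : A 0 1 = B 0 1) :
    π (stabilization A) = π (stabilization B) := by
  rw [mem_principalCongruenceSubgroup_iff] at hA hB
  have hA₁₀ : A 1 0 ∈ I := by simpa using hA 1 0
  have hB₁₀ : B 1 0 ∈ I := by simpa using hB 1 0
  rw [eq_transvection_mul_of_row_eq h₀ h₁, map_mul, map_mul,
    map_stabilization_eq_one hπ (transvection_mem_elementarySubgroup _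
      (sub_mem (I.mul_mem_right _ hA₁₀) (I.mul_mem_left _ hB₁₀))), one_mul]

open Classical in
/-- The Mennicke symbol attached to a homomorphism `π : SL₃(R) → H`: the image under `π` of any
matrix `[1, 0; 0, A]` such that `A ∈ Γ(I)` has first row `(a, b)`. The junk value is `1`. -/
noncomputable def mennickeSymbol (I : Ideal R) (π : SL(2 + 1, R) →* H) (a b : R) : H :=
  if h : ∃ A ∈ principalCongruenceSubgroup (Fin 2) I, A 0 0 = a ∧ A 0 1 = b then
    π (stabilization h.choose)
  else 1

theorem mennickeSymbol_eq (hπ : elementarySubgroup (Fin (2 + 1)) I ≤ π.ker) {A : SL(2, R)}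
    (hA : A ∈ principalCongruenceSubgroup (Fin 2) I) :
    mennickeSymbol I π (A 0 0) (A 0 1) = π (stabilization A) := by
  have h : ∃ B ∈ principalCongruenceSubgroup (Fin 2) I, B 0 0 = A 0 0 ∧ B 0 1 = A 0 1 :=
    ⟨A, hA, rfl, rfl⟩
  obtain ⟨hB, h₀, h₁⟩ := h.choose_spec
  rw [mennickeSymbol, dif_pos h]
  exact map_stabilization_eq_of_row_eq hπ hB hA h₀ h₁

theorem commute_map_stabilization_map_weylElement (hπ : elementarySubgroup (Fin (2 + 1)) I ≤ π.ker)
    {A : SL(2, R)} (hA : A ∈ principalCongruenceSubgroup (Fin 2) I) (i : Fin 2) (u : Rˣ) :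
    Commute (π (stabilization A)) (π (weylElement i u)) := by
  have hrow := commute_map_stabilization_map_rowUnipotent hπ hA
  rw [weylElement, map_mul, map_mul]
  exact ((hrow _).mul_right (commute_map_stabilization_map_colUnipotent hπ hA _)).mul_right
    (hrow _)

theorem map_upperBlock (hπ : elementarySubgroup (Fin (2 + 1)) I ≤ π.ker) {A : SL(2, R)}
    (hA : A ∈ principalCongruenceSubgroup (Fin 2) I) :
    π (upperBlock A) = π (stabilization A) := by
  have hcomm := commute_map_stabilization_map_weylElement hπ hA
  have h := congr_arg π (weylElement_mul_weylElement_mul_stabilization A)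
  simp only [map_mul] at h
  exact mul_right_cancel (h.symm.trans ((hcomm 0 1).mul_right (hcomm 1 (-1))).symm)

theorem map_outerBlock (hπ : elementarySubgroup (Fin (2 + 1)) I ≤ π.ker) {A : SL(2, R)}
    (hA : A ∈ principalCongruenceSubgroup (Fin 2) I) :
    π (outerBlock A) = π (stabilization A) := by
  have h := congr_arg π (weylElement_mul_stabilization A)
  simp only [map_mul] at h
  exact mul_right_cancel (h.symm.trans (commute_map_stabilization_map_weylElement hπ hA 0 1).symm)

theorem map_stabilization_mul (hπ : elementarySubgroup (Fin (2 + 1)) I ≤ π.ker)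
    {A B C : SL(2, R)} (hA : A ∈ principalCongruenceSubgroup (Fin 2) I)
    (hB : B ∈ principalCongruenceSubgroup (Fin 2) I)
    (hC : C ∈ principalCongruenceSubgroup (Fin 2) I) (hB₀ : B 0 0 = A 0 0) (hC₀ : C 0 0 = A 0 0)
    (hC₁ : C 0 1 = A 0 1 * B 0 1) :
    π (stabilization A) * π (stabilization B) = π (stabilization C) := by
  have h := congr_arg π (upperBlock_mul_stabilization_mul_rowUnipotent hB₀ hC₀ hC₁)
  have hAupper := map_upperBlock hπ hA
  have hCouter := map_outerBlock hπ hC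
  rw [mem_principalCongruenceSubgroup_iff] at hA hB hC
  have hA₀₁ : A 0 1 ∈ I := by simpa using hA 0 1
  have hA₁₀ : A 1 0 ∈ I := by simpa using hA 1 0
  have hB₀₁ : B 0 1 ∈ I := by simpa using hB 0 1
  have hB₁₀ : B 1 0 ∈ I := by simpa using hB 1 0
  have hC₁₀ : C 1 0 ∈ I := by simpa using hC 1 0
  have hrow : π (rowUnipotent ![-A 0 1, 0]) = 1 :=
    hπ (rowUnipotent_mem_elementarySubgroup (by simp [Fin.forall_fin_two, hA₀₁]))
  have hcol : π (colUnipotent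
      ![A 1 0 * C 1 1 - A 1 1 * B 0 1 * C 1 0, -B 1 1 * C 1 0]) = 1 := by
    refine hπ (colUnipotent_mem_elementarySubgroup (Fin.forall_fin_two.2 ⟨?_, ?_⟩))
    exacts [sub_mem (I.mul_mem_right _ hA₁₀) (I.mul_mem_left _ hC₁₀), I.mul_mem_left _ hC₁₀]
  have hmid : π (stabilization (colUnipotent ![B 1 0] * rowUnipotent ![B 0 1])) = 1 :=
    map_stabilization_eq_one hπ (mul_mem (colUnipotent_mem_elementarySubgroup (by simpa))
      (rowUnipotent_mem_elementarySubgroup (by simpa)))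
  simpa only [map_mul π, hrow, hcol, hmid, hAupper, hCouter, one_mul, mul_one] using h

theorem isMennickeSymbol_mennickeSymbol (hπ : elementarySubgroup (Fin (2 + 1)) I ≤ π.ker) :
    IsMennickeSymbol I (mennickeSymbol I π) := by
  refine ⟨fun {b} hb ↦ ?_, fun {a b} ha hb hab t ↦ ?_, fun {a b} ha hb hab t ht ↦ ?_,
    fun {a b c} ha hb hc hab hac ↦ ?_⟩
  · have hE : SpecialLinearGroup.transvection zero_ne_one b ∈ elementarySubgroup (Fin 2) I :=
      transvection_mem_elementarySubgroup _ hb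
    have h := mennickeSymbol_eq hπ (elementarySubgroup_le_principalCongruenceSubgroup I hE)
    simpa [SpecialLinearGroup.transvection_coe, map_stabilization_eq_one hπ hE] using h
  · obtain ⟨A, hA, rfl, rfl⟩ := exists_mem_principalCongruenceSubgroup_row_eq ha hb hab
    let T : SL(2, R) := SpecialLinearGroup.transvection one_ne_zero t
    have hT : Commute (π (stabilization A)) (π (stabilization T)) := by
      rw [stabilization_transvection]
      exact commute_map_stabilization_map_transvection hπ hA _ t
    have hTA : π (stabilization (T⁻¹ * A * T)) = π (stabilization A) := by
      simp only [map_mul, map_inv, hT.symm.inv_mul_cancel]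
    have h := mennickeSymbol_eq hπ (Subgroup.Normal.conj_mem' inferInstance A hA T)
    rw [hTA, ← mennickeSymbol_eq hπ hA] at h
    simpa [T, adjugate_fin_two, SpecialLinearGroup.transvection_coe, mul_apply, vecMul, vecHead,
      mul_comm t] using h
  · obtain ⟨A, hA, rfl, rfl⟩ := exists_mem_principalCongruenceSubgroup_row_eq ha hb hab
    have hE : SpecialLinearGroup.transvection zero_ne_one t ∈ elementarySubgroup (Fin 2) I :=
      transvection_mem_elementarySubgroup _ ht
    have h := mennickeSymbol_eq hπ
      (mul_mem hA (elementarySubgroup_le_principalCongruenceSubgroup I hE))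
    rw [map_mul, map_mul, map_stabilization_eq_one hπ hE, mul_one, ← mennickeSymbol_eq hπ hA] at h
    simpa [SpecialLinearGroup.transvection_coe, mul_add, mul_comm t] using h
  · obtain ⟨A, hA, rfl, rfl⟩ := exists_mem_principalCongruenceSubgroup_row_eq ha hb hab
    obtain ⟨B, hB, hB₀, rfl⟩ := exists_mem_principalCongruenceSubgroup_row_eq ha hc hac
    obtain ⟨C, hC, hC₀, hC₁⟩ := exists_mem_principalCongruenceSubgroup_row_eq ha
      (I.mul_mem_left (A 0 1) hc) (hab.mul_right hac)
    rw [mennickeSymbol_eq hπ hA, ← hB₀, mennickeSymbol_eq hπ hB, ← hC₁, hB₀, ← hC₀,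
      mennickeSymbol_eq hπ hC]
    exact map_stabilization_mul hπ hA hB hC hB₀ hC₀ hC₁

end MennickeSymbolOfHom

section RankReduction

open scoped MatrixGroups

variable {R H : Type*} [CommRing R] [Group H] {m : ℕ} {I : Ideal R}

theorem exists_isCoprime_mul_mem_elementarySubgroup {A : SL(m + 2, R)} (hA : A 0 0 - 1 ∈ I)
    [Finite (MaximalSpectrum (R ⧸ Ideal.span {A 0 0}))] :
    ∃ E ∈ elementarySubgroup (Fin (m + 2)) I, IsCoprime ((A * E) 0 0) ((A * E) 0 1) := by
  obtain ⟨x, hx⟩ := exists_sum_mul_eq_one A 0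
  rw [Fin.sum_univ_succ, Fin.sum_univ_succ] at hx
  -- The relation `∑ j, A 0 j * x j = 1` persists when `x j` is multiplied by `1 - A 0 0 ∈ I` for
  -- all `j ≠ 0`, at the expense of changing `x 0`.
  obtain ⟨s, hs⟩ := exists_isCoprime_add_mul (a := A 0 0) (b := A 0 (Fin.succ 0))
    (c := ∑ j : Fin m, A 0 j.succ.succ * ((1 - A 0 0) * x j.succ.succ))
    ⟨1 + (1 - A 0 0) * x 0, (1 - A 0 0) * x (Fin.succ 0), 1, by
      simp_rw [mul_left_comm _ (1 - A 0 0), ← Finset.mul_sum]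
      linear_combination (1 - A 0 0) * hx⟩
  refine ⟨stabilization (colUnipotent fun j ↦ s * ((1 - A 0 0) * x j.succ.succ)),
    elementarySubgroup_le_comap_stabilization (colUnipotent_mem_elementarySubgroup fun j ↦
      I.mul_mem_left _ (I.mul_mem_right _ (neg_sub (A 0 0) 1 ▸ I.neg_mem hA))), ?_⟩
  rw [mul_stabilization_apply_zero, ← Fin.succ_zero_eq_one, mul_stabilization_apply_succ]
  convert hs using 1
  simp [coe_colUnipotent, borderedMatrix, Fin.sum_univ_succ, Finset.mul_sum, mul_left_comm]

theorem exists_add_eq_one_mul_mem_elementarySubgroup {A : SL(m + 3, R)}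
    (hA : A ∈ principalCongruenceSubgroup (Fin (m + 3)) I) (hcop : IsCoprime (A 0 0) (A 0 1)) :
    ∃ E ∈ elementarySubgroup (Fin (m + 3)) I, (A * E) 0 0 + (A * E) 0 2 = 1 := by
  obtain ⟨x, y, hxy⟩ := hcop
  rw [mem_principalCongruenceSubgroup_iff] at hA
  have h₀₂ : (0 : Fin (m + 3)) ≠ 2 := ne_of_beq_false rfl
  have h₁₂ : (1 : Fin (m + 3)) ≠ 2 := ne_of_beq_false rfl
  set d := 1 - A 0 0 - A 0 2 with hd
  have hdI : d ∈ I := by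
    have h := I.neg_mem (I.add_mem (hA 0 0) (hA 0 2))
    rwa [one_apply_eq, one_apply_ne h₀₂, show -(A 0 0 - 1 + (A 0 2 - 0)) = d by rw [hd]; ring] at h
  refine ⟨_, mul_mem (transvection_mem_elementarySubgroup h₀₂ (I.mul_mem_right x hdI))
    (transvection_mem_elementarySubgroup h₁₂ (I.mul_mem_right y hdI)), ?_⟩
  simp only [← mul_assoc, Matrix.SpecialLinearGroup.coe_mul, SpecialLinearGroup.transvection_coe,
    mul_add, mul_one, Matrix.add_apply, mul_single_apply_of_ne _ _ _ _ _ h₀₂,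
    mul_single_apply_of_ne _ _ _ _ _ h₁₂, mul_single_apply_same, add_zero]
  linear_combination d * hxy

theorem exists_map_eq_map_stabilization_of_add_eq_one {π : SL(m + 1, R) →* H}
    (hπ : elementarySubgroup (Fin (m + 1)) I ≤ π.ker) {A : SL(m + 1, R)}
    (hA : A ∈ principalCongruenceSubgroup (Fin (m + 1)) I) {k : Fin m}
    (h : A 0 0 + A 0 k.succ = 1) :
    ∃ B ∈ principalCongruenceSubgroup (Fin m) I, π A = π (stabilization B) := by
  rw [mem_principalCongruenceSubgroup_iff] at hA
  have hrow (j : Fin m) : A 0 j.succ ∈ I := by simpa [(Fin.succ_ne_zero j).symm] using hA 0 j.succ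
  let e : Fin m → R := Pi.single k 1
  let v : Fin m → R := fun i ↦ A i.succ 0 + A i.succ k.succ
  have hcol (i : Fin (m + 1)) : (A * colUnipotent e) i 0 = A i 0 + A i k.succ := by
    simp [e, mul_colUnipotent_apply_zero, Pi.single_apply]
  obtain ⟨B, hB, hAB⟩ :=
    exists_eq_colUnipotent_mul_stabilization_mul_rowUnipotent ((hcol 0).trans h)
  simp only [hcol, mul_colUnipotent_apply_succ] at hB hAB
  have hBmem : B ∈ principalCongruenceSubgroup (Fin m) I := by
    refine mem_principalCongruenceSubgroup_iff.2 fun i j ↦ ?_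
    rw [hB, sub_right_comm]
    refine I.sub_mem ?_ (I.mul_mem_left _ (hrow j))
    simpa [one_apply] using hA i.succ j.succ
  have hπrow : π (rowUnipotent fun j ↦ A 0 j.succ) = 1 :=
    hπ (rowUnipotent_mem_elementarySubgroup hrow)
  have hπcol : π (colUnipotent v) = π (colUnipotent e) := by
    have hve : π (colUnipotent (v - e)) = 1 :=
      hπ (colUnipotent_mem_elementarySubgroup fun i ↦ by
        simpa [v, e, one_apply, Pi.single_apply, add_sub_assoc] using
          I.add_mem (hA i.succ 0) (hA i.succ k.succ))
    rw [← sub_add_cancel v e, colUnipotent_add, map_mul, hve, one_mul]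
  have hπAB := congr_arg π hAB
  rw [map_mul, map_mul, map_mul, hπrow, hπcol, mul_one,
    ← (commute_map_stabilization_map_colUnipotent hπ hBmem e).eq] at hπAB
  exact ⟨B, hBmem, mul_right_cancel hπAB⟩

theorem exists_map_eq_map_stabilization {π : SL(m + 3, R) →* H}
    (hπ : elementarySubgroup (Fin (m + 3)) I ≤ π.ker) {A : SL(m + 3, R)}
    (hA : A ∈ principalCongruenceSubgroup (Fin (m + 3)) I)
    [Finite (MaximalSpectrum (R ⧸ Ideal.span {A 0 0}))] :
    ∃ B ∈ principalCongruenceSubgroup (Fin (m + 2)) I, π A = π (stabilization B) := by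
  have hA₀ : A 0 0 - 1 ∈ I := mem_principalCongruenceSubgroup_iff.1 hA 0 0
  obtain ⟨E, hE, hcop⟩ := exists_isCoprime_mul_mem_elementarySubgroup hA₀
  have hAE := mul_mem hA (elementarySubgroup_le_principalCongruenceSubgroup I hE)
  obtain ⟨F, hF, hone⟩ := exists_add_eq_one_mul_mem_elementarySubgroup hAE hcop
  have hAEF := mul_mem hAE (elementarySubgroup_le_principalCongruenceSubgroup I hF)
  have hπA : π (A * E * F) = π A := by
    rw [map_mul, map_mul, MonoidHom.mem_ker.1 (hπ hE), MonoidHom.mem_ker.1 (hπ hF), mul_one,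
      mul_one]
  rw [← hπA]
  exact exists_map_eq_map_stabilization_of_add_eq_one (k := 1) hπ hAEF hone

end RankReduction

section IntegralCongruenceSubgroups

open scoped MatrixGroups

variable {H : Type*} [Group H] {m : ℕ} {q : ℤ}

theorem map_stabilization_eq_one_of_four_dvd (hq : 4 ∣ q) {π : SL(2 + 1, ℤ) →* H}
    (hπ : elementarySubgroup (Fin (2 + 1)) (Ideal.span {q}) ≤ π.ker) {A : SL(2, ℤ)}
    (hA : A ∈ principalCongruenceSubgroup (Fin 2) (Ideal.span {q})) :
    π (stabilization A) = 1 := by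
  have hmem := mem_principalCongruenceSubgroup_iff.1 hA
  have h₀₁ : A 0 1 ∈ Ideal.span {q} := by simpa using hmem 0 1
  rw [← mennickeSymbol_eq hπ hA]
  exact (isMennickeSymbol_mennickeSymbol hπ).eq_one_of_four_dvd hq (hmem 0 0) h₀₁
    ⟨A 1 1, -A 1 0, by linear_combination mul_sub_mul_eq_one A⟩

theorem exists_map_eq_map_stabilization_of_four_dvd (hq : 4 ∣ q) {π : SL(m + 3, ℤ) →* H}
    (hπ : elementarySubgroup (Fin (m + 3)) (Ideal.span {q}) ≤ π.ker) {A : SL(m + 3, ℤ)}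
    (hA : A ∈ principalCongruenceSubgroup (Fin (m + 3)) (Ideal.span {q})) :
    ∃ B ∈ principalCongruenceSubgroup (Fin (m + 2)) (Ideal.span {q}),
      π A = π (stabilization B) := by
  have hA₀ : A 0 0 ≠ 0 := fun h₀ ↦ by
    have h := mem_principalCongruenceSubgroup_iff.1 hA 0 0
    rw [h₀, one_apply_eq, Ideal.mem_span_singleton] at h
    exact absurd (hq.trans h) (by decide)
  have := finite_maximalSpectrum_int_quotient hA₀
  exact exists_map_eq_map_stabilization hπ hA

theorem principalCongruenceSubgroup_le_ker (hq : 4 ∣ q) {π : SL(m + 3, ℤ) →* H}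
    (hπ : elementarySubgroup (Fin (m + 3)) (Ideal.span {q}) ≤ π.ker) :
    principalCongruenceSubgroup (Fin (m + 3)) (Ideal.span {q}) ≤ π.ker := by
  induction m with
  | zero =>
    intro A hA
    obtain ⟨B, hB, hAB⟩ := exists_map_eq_map_stabilization_of_four_dvd hq hπ hA
    exact hAB.trans (map_stabilization_eq_one_of_four_dvd hq hπ hB)
  | succ m ih =>
    intro A hA
    obtain ⟨B, hB, hAB⟩ := exists_map_eq_map_stabilization_of_four_dvd hq hπ hA
    exact hAB.trans (ih (π := π.comp stabilization)
      (elementarySubgroup_le_comap_stabilization.trans (Subgroup.comap_mono hπ)) hB)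

theorem elementarySubgroup_eq_principalCongruenceSubgroup {n : ℕ} (hn : 3 ≤ n) (hq : 4 ∣ q) :
    elementarySubgroup (Fin n) (Ideal.span {q}) =
      principalCongruenceSubgroup (Fin n) (Ideal.span {q}) := by
  obtain ⟨m, rfl⟩ := Nat.exists_eq_add_of_le' hn
  refine (elementarySubgroup_le_principalCongruenceSubgroup _).antisymm ?_
  set E := elementarySubgroup (Fin (m + 3)) (Ideal.span {q})
  have h := principalCongruenceSubgroup_le_ker hq (QuotientGroup.ker_mk' E).ge
  rwa [QuotientGroup.ker_mk'] at h

end IntegralCongruenceSubgroups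

section CongruenceKernel

variable {ι R K H : Type*} [Fintype ι] [DecidableEq ι] [CommRing R] [Group H]

theorem map_transvection_pow_eq_one [CommRing K] [IsDomain K] (p : ℕ) [Fact p.Prime] [CharP K p]
    {κ : Type*} [Fintype κ] [DecidableEq κ] (hι : 3 ≤ Fintype.card ι)
    (ρ : SpecialLinearGroup ι R →* GL κ K) {i j : ι} (hij : i ≠ j) (a : R) :
    ρ (SpecialLinearGroup.transvection hij a) ^
      ((Fintype.card κ).factorial * p ^ Fintype.card κ) = 1 := by
  obtain ⟨k, hki, hkj⟩ : ∃ k, k ≠ i ∧ k ≠ j := by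
    obtain ⟨k, -, hk⟩ := Finset.exists_mem_notMem_of_card_lt_card
      (Finset.card_le_two.trans_lt hι : ({i, j} : Finset ι).card < Finset.univ.card)
    exact ⟨k, by simpa using hk⟩
  have hcomm := commutatorElement_transvection hij hki.symm hkj a 1
  rw [mul_one] at hcomm
  rw [← hcomm, map_commutatorElement]
  refine commutatorElement_pow_eq_one p ?_ ?_ <;> rw [← map_commutatorElement, hcomm]
  · exact (commute_transvection _ _ hki hij.symm _ _).map ρ
  · exact (commute_transvection _ _ hij.symm hkj.symm _ _).map ρ

theorem elementarySubgroup_span_natCast_le_ker {ρ : SpecialLinearGroup ι ℤ →* H} {ℓ : ℕ}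
    (h : ∀ (i j : ι) (hij : i ≠ j), ρ (SpecialLinearGroup.transvection hij 1) ^ ℓ = 1) :
    elementarySubgroup ι (Ideal.span {(ℓ : ℤ)}) ≤ ρ.ker :=
  elementarySubgroup_le fun i j hij b hb ↦ by
    obtain ⟨c, rfl⟩ := Ideal.mem_span_singleton.1 hb
    rw [MonoidHom.mem_ker, ← mul_one (ℓ * c : ℤ), ← smul_eq_mul, transvection_zsmul, map_zpow,
      _root_.zpow_mul, zpow_natCast, h, _root_.one_zpow]

theorem ker_map_intCastRingHom (ℓ : ℕ) :
    (SpecialLinearGroup.map (Int.castRingHom (ZMod ℓ))).ker =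
      principalCongruenceSubgroup ι (Ideal.span {(ℓ : ℤ)}) := by
  ext A
  rw [mem_ker_map_iff, ZMod.ker_intCastRingHom, mem_principalCongruenceSubgroup_iff]

theorem exists_eq_comp_map_intCastRingHom {n ℓ : ℕ} [NeZero ℓ]
    {ρ : SpecialLinearGroup (Fin n) ℤ →* H}
    (h : principalCongruenceSubgroup (Fin n) (Ideal.span {(ℓ : ℤ)}) ≤ ρ.ker) :
    ∃ ρ' : SpecialLinearGroup (Fin n) (ZMod ℓ) →* H,
      ρ = ρ'.comp (SpecialLinearGroup.map (Int.castRingHom (ZMod ℓ))) := by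
  have hsurj := specialLinearGroup_map_surjective (m := n)
    (ZMod.ringHom_surjective (Int.castRingHom (ZMod ℓ)))
  exact ⟨_, (MonoidHom.liftOfRightInverse_comp _ _ (Function.rightInverse_surjInv hsurj)
    ⟨ρ, (ker_map_intCastRingHom ℓ).le.trans h⟩).symm⟩

end CongruenceKernel

theorem factors_through_finite_quotient_of_charP_general (p : ℕ) (K : Type*) [CommRing K]
    [IsDomain K] [CharP K p] (hp : p ≠ 0) (n N : ℕ) (hn : 3 ≤ n)
    (ρ : Matrix.SpecialLinearGroup (Fin n) ℤ →* GL (Fin N) K) :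
    ∃ ρ' : Matrix.SpecialLinearGroup (Fin n) (ZMod (4 * (N.factorial * p ^ N))) →* GL (Fin N) K,
      ρ = ρ'.comp (Matrix.SpecialLinearGroup.map (Int.castRingHom _)) := by
  have : Fact p.Prime := ⟨(CharP.char_is_prime_or_zero K p).resolve_right hp⟩
  have : NeZero (4 * (N.factorial * p ^ N)) := ⟨by positivity⟩
  have hpow (i j : Fin n) (hij : i ≠ j) :
      ρ (SpecialLinearGroup.transvection hij 1) ^ (4 * (N.factorial * p ^ N)) = 1 := by
    have h := map_transvection_pow_eq_one p (by simpa using hn) ρ hij 1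
    rw [Fintype.card_fin] at h
    rw [pow_mul', h, one_pow]
  apply exists_eq_comp_map_intCastRingHom
  rw [← elementarySubgroup_eq_principalCongruenceSubgroup hn (by simp)]
  exact elementarySubgroup_span_natCast_le_ker hpow

/-- Let `k` be a field of characteristic `p > 0` and `n ≥ 3`.  Every finite-dimensional
representation `ρ : SL_n(ℤ) → GL_N(k)` factors through the reduction map
`SL_n(ℤ) → SL_n(ℤ/ℓℤ)` for some `ℓ ≥ 1`. -/
theorem factors_through_finite_quotient_of_charP (p : ℕ) (K : Type*) [Field K]
    [CharP K p] (hp : p ≠ 0) (n N : ℕ) (hn : 3 ≤ n)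
    (ρ : Matrix.SpecialLinearGroup (Fin n) ℤ →* GL (Fin N) K) :
    ∃ ℓ : ℕ, 1 ≤ ℓ ∧
      ∃ ρ' : Matrix.SpecialLinearGroup (Fin n) (ZMod ℓ) →* GL (Fin N) K,
        ρ = ρ'.comp (Matrix.SpecialLinearGroup.map (Int.castRingHom (ZMod ℓ))) :=
  ⟨4 * (N.factorial * p ^ N), Nat.one_le_iff_ne_zero.2 (by positivity),
    factors_through_finite_quotient_of_charP_general p K hp n N hn ρ⟩
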